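/- Let U and V be minimal representations such that for every valuation σ the maximum of ⟦u⟧σ over u ∈ U equals the maximum of ⟦v⟧σ over v ∈ V. Then for every finite set E, variable x and S ∈ ℕ, the sublevel A(E, x, S) belongs to U if and only if it belongs to V. -/

import Mathlib

/-- The impredicative maximum on natural numbers. -/
def imaxN : ℕ → ℕ → ℕ
  | _, 0 => 0
  | i, (j+1) => max i (j+1)

/-- Sublevels A(E,x,S) and B(E,S). -/
inductive SubLvl where
  | A : Finset ℕ → ℕ → ℕ → SubLvl
  | B : Finset ℕ → ℕ → SubLvl
deriving DecidableEq

/-- Value of a sublevel under a valuation. -/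
def evalS (σ : ℕ → ℕ) : SubLvl → ℕ
  | .A E x S => if ∃ y ∈ E, σ y = 0 then 0 else σ x + S
  | .B E S => if ∃ y ∈ E, σ y = 0 then 0 else S

/-- Wellformed sublevels. -/
def Wf : SubLvl → Prop
  | .A E x _ => x ∈ E
  | .B _ S => 0 < S

/-- Semantic comparison of sublevels. -/
def leT (u v : SubLvl) : Prop := ∀ σ : ℕ → ℕ, evalS σ u ≤ evalS σ v

/-- A minimal representation: a finite set of wellformed, pairwise
incomparable sublevels. -/
def MinRep (U : Finset SubLvl) : Prop :=
  (∀ u ∈ U, Wf u) ∧ ∀ u ∈ U, ∀ v ∈ U, u ≠ v → ¬ leT u v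

/-! Raise `x` far above every constant occurring in `V`, give the other variables of `E` the value
`1` and all remaining ones `0`. The only sublevels of `V` that can reach the value of `A(E, x, S)`
under this valuation are the `A(F, x, T)` with `F ⊆ E` and `S ≤ T`. Going from `U` to `V` and back
thus yields a sublevel of `U` above the initial one; by minimality the two coincide, and then so
does the sublevel of `V` squeezed between them. -/

theorem le_evalS_A_iff {σ : ℕ → ℕ} {E : Finset ℕ} {x S n : ℕ} (hn : 0 < n) :
    n ≤ evalS σ (.A E x S) ↔ (∀ y ∈ E, σ y ≠ 0) ∧ n ≤ σ x + S := by
  by_cases hzero : ∃ y ∈ E, σ y = 0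
  · obtain ⟨y, hyE, hy⟩ := hzero
    have heval : evalS σ (.A E x S) = 0 := if_pos ⟨y, hyE, hy⟩
    exact iff_of_false (by omega) fun h => h.1 y hyE hy
  · have heval : evalS σ (.A E x S) = σ x + S := if_neg hzero
    have hne : ∀ y ∈ E, σ y ≠ 0 := fun y hyE hy => hzero ⟨y, hyE, hy⟩
    rw [heval, and_iff_right hne]

theorem evalS_B_le (σ : ℕ → ℕ) (E : Finset ℕ) (S : ℕ) : evalS σ (.B E S) ≤ S := by
  simp only [evalS]
  split_ifs <;> omega

theorem leT_A_of_subset_of_le {E F : Finset ℕ} {S T : ℕ} (x : ℕ) (hFE : F ⊆ E) (hST : S ≤ T) :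
    leT (.A E x S) (.A F x T) := by
  intro σ
  rcases (evalS σ (.A E x S)).eq_zero_or_pos with hzero | hpos
  · exact hzero ▸ Nat.zero_le _
  · obtain ⟨hE, hle⟩ := (le_evalS_A_iff hpos).1 le_rfl
    exact (le_evalS_A_iff hpos).2 ⟨fun y hy => hE y (hFE hy), by omega⟩

theorem MinRep.eq_of_leT {U : Finset SubLvl} (hU : MinRep U) {u v : SubLvl} (hu : u ∈ U)
    (hv : v ∈ U) (huv : leT u v) : u = v :=
  by_contra fun hne => hU.2 u hu v hv hne huv

/-- The numerical constant `S` of a sublevel `A(E, x, S)` or `B(E, S)`. -/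
def SubLvl.offset : SubLvl → ℕ
  | .A _ _ S => S
  | .B _ S => S

/-- The valuation equal to `M` at `x`, to `1` on the rest of `E` and to `0` elsewhere. For large `M`
it isolates the sublevels `A(F, x, T)` with `F ⊆ E`. -/
def peak (E : Finset ℕ) (x M : ℕ) : ℕ → ℕ :=
  fun y => if y = x then M else if y ∈ E then 1 else 0

theorem peak_self (E : Finset ℕ) (x M : ℕ) : peak E x M x = M :=
  if_pos rfl

theorem peak_le_one (E : Finset ℕ) {x y : ℕ} (M : ℕ) (hyx : y ≠ x) : peak E x M y ≤ 1 := by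
  simp only [peak, if_neg hyx]
  split_ifs <;> omega

theorem peak_ne_zero_iff {E : Finset ℕ} {x M : ℕ} (hx : x ∈ E) (hM : M ≠ 0) (y : ℕ) :
    peak E x M y ≠ 0 ↔ y ∈ E := by
  by_cases hyx : y = x
  · simp [peak, hyx, hx, hM]
  · simp [peak, hyx]

theorem exists_eq_A_of_le_evalS_peak {E : Finset ℕ} {x S M : ℕ} {v : SubLvl} (hx : x ∈ E)
    (hM : v.offset + 1 < M) (hv : M + S ≤ evalS (peak E x M) v) :
    ∃ F T, v = .A F x T ∧ F ⊆ E ∧ S ≤ T := by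
  cases v with
  | B F T =>
    have hle : M + S ≤ T := hv.trans (evalS_B_le _ F T)
    simp only [SubLvl.offset] at hM
    omega
  | A F z T =>
    simp only [SubLvl.offset] at hM
    obtain ⟨hF, hle⟩ := (le_evalS_A_iff (by omega)).1 hv
    have hzx : z = x := by
      by_contra hne
      have := peak_le_one E M hne
      omega
    subst hzx
    rw [peak_self] at hle
    exact ⟨F, T, rfl, fun y hy => (peak_ne_zero_iff hx (by omega) y).1 (hF y hy), by omega⟩

theorem exists_A_mem_of_forall_evalS_le_sup {V : Finset SubLvl} {E : Finset ℕ} {x S : ℕ}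
    (hx : x ∈ E) (h : ∀ σ, evalS σ (.A E x S) ≤ V.sup (evalS σ)) :
    ∃ F T, .A F x T ∈ V ∧ F ⊆ E ∧ S ≤ T := by
  let M := V.sup SubLvl.offset + 2
  have hpos : 0 < M + S := by omega
  have hA : M + S ≤ evalS (peak E x M) (.A E x S) :=
    (le_evalS_A_iff hpos).2
      ⟨fun y => (peak_ne_zero_iff hx (by omega) y).2, by rw [peak_self]⟩
  obtain ⟨v, hvV, hv⟩ := (Finset.le_sup_iff hpos).1 (hA.trans (h _))
  have hoffset : v.offset ≤ V.sup SubLvl.offset := Finset.le_sup hvV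
  obtain ⟨F, T, rfl, hFE, hST⟩ :=
    exists_eq_A_of_le_evalS_peak hx (by omega : v.offset + 1 < M) hv
  exact ⟨F, T, hvV, hFE, hST⟩

theorem MinRep.A_mem_of_sup_evalS_eq {U V : Finset SubLvl} (hU : MinRep U) (hV : MinRep V)
    (h : ∀ σ, U.sup (evalS σ) = V.sup (evalS σ)) {E : Finset ℕ} {x S : ℕ}
    (hA : .A E x S ∈ U) : .A E x S ∈ V := by
  obtain ⟨F, T, hFV, hFE, hST⟩ := exists_A_mem_of_forall_evalS_le_sup (hU.1 _ hA)
    fun σ => h σ ▸ Finset.le_sup (f := evalS σ) hA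
  obtain ⟨G, R, hGU, hGF, hTR⟩ := exists_A_mem_of_forall_evalS_le_sup (hV.1 _ hFV)
    fun σ => h σ ▸ Finset.le_sup (f := evalS σ) hFV
  have hEG : SubLvl.A E x S = .A G x R :=
    hU.eq_of_leT hA hGU (leT_A_of_subset_of_le x (hGF.trans hFE) (hST.trans hTR))
  obtain ⟨rfl, -, rfl⟩ := SubLvl.A.inj hEG
  obtain rfl : F = E := hFE.antisymm hGF
  obtain rfl : T = S := hTR.antisymm hST
  exact hFV

theorem minrep_same_A (U V : Finset SubLvl) (hU : MinRep U) (hV : MinRep V)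
    (h : ∀ σ : ℕ → ℕ, U.sup (evalS σ) = V.sup (evalS σ)) :
    ∀ (E : Finset ℕ) (x S : ℕ), SubLvl.A E x S ∈ U ↔ SubLvl.A E x S ∈ V := by
  intro E x S
  exact ⟨hU.A_mem_of_sup_evalS_eq hV h, hV.A_mem_of_sup_evalS_eq hU fun σ => (h σ).symm⟩
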